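/- If X is a smooth fan such that E(X) is compact, then E(X) is zero-dimensional, X is homeomorphic to the cone over E(X), and X is not endpoint rigid: there exists a homeomorphism h : X → X with h(e) ≠ e for some e ∈ E(X). -/

import Mathlib

/-!
Write `C` for the Cantor set. A smooth fan `X` meets each leg of the Cantor fan in a segment
issuing from the vertex (`smul_mem`): a gap in a leg persists at the same height over a clopen
set of neighbouring legs, which disconnects `X`. The endpoints of `X` are therefore exactly the
points that are highest on their leg (`endpoints_eq_tops`). Other points of a leg start two
segments, one downwards and one upwards, while an arc starting at a top must run down its leg for
a while, because its slope is a continuous function into the totally disconnected set `C`; two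
such arcs overlap. The same overlap argument shows that there are at least two tops, since the
vertex has order at least `2`.

Let the set `E` of tops be compact. The slope is continuous and injective on `E`, so `E` embeds
in `C` and is zero-dimensional. The map `(e, s) ↦ s • e` induces a continuous bijection from the
compact cone over `E` onto `X`, hence a homeomorphism (`exists_cone_homeomorph`).

Any self-homeomorphism `g` of `E` induces one of the cone that acts as `g` on `E × {1}`, so it
remains to find one that is not the identity (`exists_homeomorph_ne`). If `E` has two isolated
points, swap them. Otherwise `E` minus its at most one isolated point is a nonempty compact space
without isolated points, separated by countably many clopen sets, and so it is homeomorphic to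
`ℕ → Bool` (`nonempty_homeomorph_natToBool`), where all digits can be flipped.
-/

open Set Topology

noncomputable section

namespace SmoothFanPaper

/-- `A` is an arc (a homeomorphic copy of `[0,1]`) with endpoints `a` and `b`. -/
def IsArc {α : Type*} [TopologicalSpace α] (A : Set α) (a b : α) : Prop :=
  ∃ h : (Set.Icc (0:ℝ) 1) ≃ₜ A,
    (h ⟨0, Set.left_mem_Icc.mpr zero_le_one⟩ : α) = a ∧
    (h ⟨1, Set.right_mem_Icc.mpr zero_le_one⟩ : α) = b

/-- The order of `x` in `X` is at least `n`: there are `n` arcs contained in `X`, each with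
`x` as an endpoint, which pairwise meet only in `x`. -/
def OrderAtLeast {α : Type*} [TopologicalSpace α] (X : Set α) (x : α) (n : ℕ) : Prop :=
  ∃ A : Fin n → Set α, (∀ i, A i ⊆ X) ∧ (∀ i, ∃ b, IsArc (A i) x b) ∧
    ∀ i j, i ≠ j → A i ∩ A j = {x}

/-- The set of endpoints of `X`: points of order exactly `1`. -/
def Endpoints {α : Type*} [TopologicalSpace α] (X : Set α) : Set α :=
  {x | x ∈ X ∧ OrderAtLeast X x 1 ∧ ¬ OrderAtLeast X x 2}

/-- The Cantor fan: the union of all straight-line segments from the origin to the points of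
`cantorSet × {1}` in the plane. -/
def CantorFan : Set (ℝ × ℝ) :=
  {q | ∃ c ∈ cantorSet, ∃ t ∈ Set.Icc (0:ℝ) 1, q = (t * c, t)}

/-- The cone point of the Cantor fan. -/
def fanVertex : ℝ × ℝ := (0, 0)

/-- A smooth fan: a non-degenerate subcontinuum of the Cantor fan containing the cone point,
whose cone point (the vertex) has order at least 2.  (Every statement below about smooth fans
is invariant under homeomorphisms, so we may realize all smooth fans concretely as such
subcontinua.) -/
structure IsSmoothFan (X : Set (ℝ × ℝ)) : Prop where
  subset_fan : X ⊆ CantorFan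
  isCompact : IsCompact X
  isConnected : IsConnected X
  nondegenerate : ∃ x ∈ X, ∃ y ∈ X, x ≠ y
  vertex_mem : fanVertex ∈ X
  vertex_order : OrderAtLeast X fanVertex 2

/-- Two subsets of `(0,1)` are order isomorphic if some order preserving self-homeomorphism
of `[0,1]` maps one onto the other. -/
def OrderIsomorphic (A B : Set ℝ) : Prop :=
  ∃ h : (Set.Icc (0:ℝ) 1) ≃ₜ (Set.Icc (0:ℝ) 1), StrictMono h ∧
    Subtype.val '' (⇑h '' (Subtype.val ⁻¹' A)) = B

/-- The canonical parametrization of (subsets of) the leg of the Cantor fan through `e`: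
a point of the leg is sent to its height, rescaled so that `e` is at height `1`. -/
def legParam (e : ℝ × ℝ) (S : Set (ℝ × ℝ)) : Set ℝ :=
  (fun q : ℝ × ℝ => q.2 / e.2) '' S

/-- The trace of the closure of a set `T` on the open leg `pe ∖ {p, e}` (where `p` is the
vertex and `pe = segment ℝ p e` is the unique arc in a smooth fan from `p` to an endpoint
`e`), viewed as a subset of `(0,1)` via the canonical parametrization of the leg. -/
def legTrace (T : Set (ℝ × ℝ)) (e : ℝ × ℝ) : Set ℝ :=
  legParam e ((closure T ∩ segment ℝ fanVertex e) \ {fanVertex, e})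

/-- `K` enumerates a countably infinite set `𝒦` of compact subsets of `(0,1)`, no two of
which are order isomorphic. -/
def KFamily (K : ℕ → Set ℝ) : Prop :=
  (∀ n, IsCompact (K n) ∧ K n ⊆ Set.Ioo (0:ℝ) 1) ∧
    ∀ m n, m ≠ n → ¬ OrderIsomorphic (K m) (K n)

/-- `X` is a `𝒦`-fan with witnessing endpoint set `E_𝒦 = {e n : n ∈ ℕ}`. -/
structure IsKFan (K : ℕ → Set ℝ) (X : Set (ℝ × ℝ)) (e : ℕ → ℝ × ℝ) : Prop where
  fan : IsSmoothFan X
  mem_endpoints : ∀ n, e n ∈ Endpoints X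
  trace_iso : ∀ n, OrderIsomorphic (legTrace (Endpoints X) (e n)) (K n)
  trace_not_iso : ∀ x ∈ Endpoints X \ Set.range e, ∀ n,
    ¬ OrderIsomorphic (legTrace (Endpoints X) x) (K n)
  meets_closure : ∀ x ∈ Endpoints X \ Set.range e,
    ((closure (Set.range e) ∩ segment ℝ fanVertex x) \ {fanVertex}).Nonempty

/-- A smooth fan is endpoint rigid if every self-homeomorphism fixes every endpoint. -/
def EndpointRigid (X : Set (ℝ × ℝ)) : Prop :=
  ∀ h : X ≃ₜ X, ∀ x : X, (x : ℝ × ℝ) ∈ Endpoints X → ((h x : X) : ℝ × ℝ) = (x : ℝ × ℝ)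

/-- Complete Erdős space `𝔈_c`: the points of the Hilbert space `ℓ²` all of whose
coordinates lie in `{0} ∪ {1/m : m ≥ 1}`. -/
def ErdosSpace : Set (lp (fun _ : ℕ => ℝ) 2) :=
  {x | ∀ n : ℕ, x n = 0 ∨ ∃ m : ℕ, 0 < m ∧ x n = 1 / m}

/-- `z` is a point of zero-dimensionality of the space it lives in: it has a neighborhood
basis of clopen subsets. -/
def ZeroDimPointAt {α : Type*} [TopologicalSpace α] (z : α) : Prop :=
  ∀ U ∈ nhds z, ∃ V : Set α, IsClopen V ∧ z ∈ V ∧ V ⊆ U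
/-- `L₀^φ = {(x,y) : x ∈ C, 0 ≤ y ≤ φ(x)}`, over the Cantor set. -/
def L0 (φ : ℝ → ℝ) : Set (ℝ × ℝ) :=
  {q | q.1 ∈ cantorSet ∧ 0 ≤ q.2 ∧ q.2 ≤ φ q.1}

/-- `G₀^φ = {(x,φ(x)) : x ∈ C, φ(x) > 0}`, over the Cantor set. -/
def G0 (φ : ℝ → ℝ) : Set (ℝ × ℝ) :=
  {q | q.1 ∈ cantorSet ∧ 0 < q.2 ∧ q.2 = φ q.1}

/-- The setoid on `L₀^φ` identifying the set `C × {0}` to a point. -/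
def L0Setoid (φ : ℝ → ℝ) : Setoid (L0 φ) where
  r a b := a = b ∨ ((a : ℝ × ℝ).2 = 0 ∧ (b : ℝ × ℝ).2 = 0)
  iseqv := by
    constructor
    · exact fun _ => Or.inl rfl
    · rintro a b (rfl | ⟨h1, h2⟩)
      · exact Or.inl rfl
      · exact Or.inr ⟨h2, h1⟩
    · rintro a b c (rfl | ⟨h1, h2⟩) (rfl | ⟨h3, h4⟩)
      · exact Or.inl rfl
      · exact Or.inr ⟨h3, h4⟩
      · exact Or.inr ⟨h1, h2⟩
      · exact Or.inr ⟨h1, h4⟩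

/-- The quotient space `L₀^φ / (C × {0})`. -/
def L0Quot (φ : ℝ → ℝ) : Type := Quotient (L0Setoid φ)

instance (φ : ℝ → ℝ) : TopologicalSpace (L0Quot φ) :=
  inferInstanceAs (TopologicalSpace (Quotient (L0Setoid φ)))

/-- The quotient projection `L₀^φ → L₀^φ / (C × {0})`. -/
def L0Proj (φ : ℝ → ℝ) : L0 φ → L0Quot φ := Quotient.mk (L0Setoid φ)

/-- The setoid on `E × [0,1]` identifying `E × {0}` to a point. -/
def coneSetoid (E : Type*) : Setoid (E × Set.Icc (0:ℝ) 1) where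
  r a b := a = b ∨ ((a.2 : ℝ) = 0 ∧ (b.2 : ℝ) = 0)
  iseqv := by
    constructor
    · exact fun _ => Or.inl rfl
    · rintro a b (rfl | ⟨h1, h2⟩)
      · exact Or.inl rfl
      · exact Or.inr ⟨h2, h1⟩
    · rintro a b c (rfl | ⟨h1, h2⟩) (rfl | ⟨h3, h4⟩)
      · exact Or.inl rfl
      · exact Or.inr ⟨h3, h4⟩
      · exact Or.inr ⟨h1, h2⟩
      · exact Or.inr ⟨h1, h4⟩

/-- The cone over a space `E`: the quotient `(E × [0,1]) / (E × {0})`. -/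
def Cone (E : Type*) [TopologicalSpace E] : Type _ := Quotient (coneSetoid E)

instance (E : Type*) [TopologicalSpace E] : TopologicalSpace (Cone E) :=
  inferInstanceAs (TopologicalSpace (Quotient (coneSetoid E)))

/-- A point of the one-point compactification of the disjoint union of the fans `X i`
is to be glued iff it is `∞` or the vertex of one of the fans. -/
def isGluedPoint {ι : Type*} (X : ι → Set (ℝ × ℝ)) :
    OnePoint (Σ i : ι, X i) → Prop :=
  fun a => a.elim True (fun q => (q.2 : ℝ × ℝ) = fanVertex)

/-- The setoid gluing the vertices (and the point at infinity) of the fans `X i`. -/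
def fanSumSetoid {ι : Type*} (X : ι → Set (ℝ × ℝ)) :
    Setoid (OnePoint (Σ i : ι, X i)) where
  r a b := a = b ∨ (isGluedPoint X a ∧ isGluedPoint X b)
  iseqv := by
    constructor
    · exact fun _ => Or.inl rfl
    · rintro a b (rfl | ⟨h1, h2⟩)
      · exact Or.inl rfl
      · exact Or.inr ⟨h2, h1⟩
    · rintro a b c (rfl | ⟨h1, h2⟩) (rfl | ⟨h3, h4⟩)
      · exact Or.inl rfl
      · exact Or.inr ⟨h3, h4⟩
      · exact Or.inr ⟨h1, h2⟩
      · exact Or.inr ⟨h1, h4⟩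

/-- The sum `Σᵢ Xᵢ` of a (finite or countably infinite) family of smooth fans: the quotient of
the one-point compactification of their disjoint union identifying the set consisting of all
the vertices and the point at infinity to a single point.  (For a finite family, `∞` is an
isolated point which is absorbed by the vertex class, so this agrees with the quotient of the
plain disjoint union identifying the vertices.) -/
def FanSum {ι : Type*} (X : ι → Set (ℝ × ℝ)) : Type _ := Quotient (fanSumSetoid X)

instance {ι : Type*} (X : ι → Set (ℝ × ℝ)) : TopologicalSpace (FanSum X) :=
  inferInstanceAs (TopologicalSpace (Quotient (fanSumSetoid X)))

/-! ### Spaces separated by countably many clopen sets -/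

/-- Brouwer's characterization of the Cantor space, for a compact space without isolated points
whose points are separated by a sequence of clopen sets. Repeated splitting produces a binary
tree of nonempty clopen sets; at level `n` a set is split by `U n` whenever `U n` cuts it, so
each branch shrinks to a point. -/
theorem nonempty_homeomorph_natToBool {Q : Type*} [TopologicalSpace Q] [CompactSpace Q]
    [Nonempty Q] (U : ℕ → Set Q) (hU : ∀ n, IsClopen (U n))
    (hsep : ∀ x y, (∀ n, x ∈ U n ↔ y ∈ U n) → x = y) (hperf : ∀ x : Q, ¬ IsOpen {x}) :
    Nonempty (Q ≃ₜ (ℕ → Bool)) := by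
  classical
  have hsplit : ∀ (n : ℕ) (A : Set Q), ∃ S : Set Q, IsClopen A → A.Nonempty →
      IsClopen S ∧ (A ∩ S).Nonempty ∧ (A \ S).Nonempty ∧
        ((A ∩ U n).Nonempty → (A \ U n).Nonempty → S = U n) := by
    intro n A
    by_cases h : (A ∩ U n).Nonempty ∧ (A \ U n).Nonempty
    · exact ⟨U n, fun _ _ => ⟨hU n, h.1, h.2, fun _ _ => rfl⟩⟩
    · by_cases hA : IsClopen A ∧ A.Nonempty
      · obtain ⟨hA, x, hx⟩ := hA
        obtain ⟨y, hy, hyx⟩ : ∃ y ∈ A, y ≠ x := by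
          by_contra! hcon
          have : A = {x} := Set.eq_singleton_iff_unique_mem.2 ⟨hx, hcon⟩
          exact hperf x (this ▸ hA.isOpen)
        obtain ⟨m, hm⟩ : ∃ m, ¬ (y ∈ U m ↔ x ∈ U m) := by
          by_contra! hcon
          exact hyx (hsep y x hcon)
        refine ⟨U m, fun _ _ => ⟨hU m, ?_, ?_, fun h1 h2 => absurd ⟨h1, h2⟩ h⟩⟩
        · by_cases hxm : x ∈ U m
          · exact ⟨x, hx, hxm⟩
          · exact ⟨y, hy, by tauto⟩
        · by_cases hxm : x ∈ U m
          · exact ⟨y, hy, by tauto⟩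
          · exact ⟨x, hx, hxm⟩
      · exact ⟨∅, fun h1 h2 => absurd ⟨h1, h2⟩ hA⟩
  choose S hS using hsplit
  -- `A b n` is the set at level `n` on the branch `b`.
  let A : (ℕ → Bool) → ℕ → Set Q := fun b n =>
    Nat.rec Set.univ (fun n B => if b n then B ∩ S n B else B \ S n B) n
  have hA0 : ∀ b, A b 0 = Set.univ := fun b => rfl
  have hAs : ∀ b n, A b (n + 1) = if b n then A b n ∩ S n (A b n) else A b n \ S n (A b n) :=
    fun b n => rfl
  have hclopen : ∀ b n, IsClopen (A b n) ∧ (A b n).Nonempty := by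
    intro b n
    induction n with
    | zero => exact ⟨isClopen_univ, Set.univ_nonempty⟩
    | succ n ih =>
      obtain ⟨h1, h2, h3, -⟩ := hS n (A b n) ih.1 ih.2
      rw [hAs]
      split_ifs
      · exact ⟨ih.1.inter h1, h2⟩
      · exact ⟨ih.1.diff h1, h3⟩
  have hdec : ∀ b n, A b (n + 1) ⊆ A b n := by
    intro b n
    rw [hAs]
    split_ifs
    · exact Set.inter_subset_left
    · exact Set.sdiff_subset
  have hne : ∀ b, (⋂ n, A b n).Nonempty := fun b =>
    IsCompact.nonempty_iInter_of_sequence_nonempty_isCompact_isClosed _ (hdec b)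
      (fun n => (hclopen b n).2) isCompact_univ (fun n => (hclopen b n).1.isClosed)
  choose g hg using hne
  have hg' : ∀ b n, g b ∈ A b n := fun b n => Set.mem_iInter.1 (hg b) n
  -- Two points on the same branch are never separated by any `U n`.
  have huniq : ∀ b x y, (∀ n, x ∈ A b n) → (∀ n, y ∈ A b n) → x = y := by
    have key : ∀ b x y, (∀ n, x ∈ A b n) → (∀ n, y ∈ A b n) → ∀ n, x ∈ U n → y ∈ U n := by
      intro b x y hx hy n hxn
      by_contra hyn
      have := (hS n (A b n) (hclopen b n).1 (hclopen b n).2).2.2.2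
        ⟨x, hx n, hxn⟩ ⟨y, hy n, hyn⟩
      have hx1 := hx (n + 1)
      have hy1 := hy (n + 1)
      rw [hAs, this] at hx1 hy1
      split_ifs at hx1 hy1
      · exact hyn hy1.2
      · exact hx1.2 hxn
    exact fun b x y hx hy => hsep x y fun n => ⟨key b x y hx hy n, key b y x hy hx n⟩
  have hagree : ∀ b b' n, (∀ i < n, b i = b' i) → A b n = A b' n := by
    intro b b' n
    induction n with
    | zero => intro _; rfl
    | succ n ih =>
      intro h
      rw [hAs, hAs, ih fun i hi => h i (by omega), h n (by omega)]
  have hinj : Function.Injective g := by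
    intro b b' h
    have : ∀ n, ∀ i < n, b i = b' i := by
      intro n
      induction n with
      | zero => intro i hi; omega
      | succ n ih =>
        intro i hi
        rcases Nat.lt_succ_iff_lt_or_eq.1 hi with hi | rfl
        · exact ih i hi
        · have h1 := hg' b (i + 1)
          have h2 := hg' b' (i + 1)
          rw [hAs] at h1 h2
          rw [← hagree b b' i ih, ← h] at h2
          cases hb : b i <;> cases hb' : b' i <;> simp_all
    exact funext fun i => this (i + 1) i (by omega)
  have hsurj : Function.Surjective g := by
    intro x
    -- The branch of `x`, built together with its level sets.
    let B : ℕ → Set Q := fun n =>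
      Nat.rec Set.univ (fun n B => if x ∈ S n B then B ∩ S n B else B \ S n B) n
    let b : ℕ → Bool := fun n => decide (x ∈ S n (B n))
    have hB : ∀ n, A b n = B n ∧ x ∈ B n := by
      intro n
      induction n with
      | zero => exact ⟨rfl, Set.mem_univ x⟩
      | succ n ih =>
        have hBs : B (n + 1) = if x ∈ S n (B n) then B n ∩ S n (B n) else B n \ S n (B n) := rfl
        rw [hAs, hBs, ih.1]
        by_cases hx : x ∈ S n (B n)
        · simp [b, hx, ih.2]
        · simp [b, hx, ih.2]
    exact ⟨b, huniq b _ _ (hg' b) fun n => (hB n).1 ▸ (hB n).2⟩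
  have : T2Space Q := by
    refine ⟨fun x y hxy => ?_⟩
    obtain ⟨m, hm⟩ : ∃ m, ¬ (x ∈ U m ↔ y ∈ U m) := by
      by_contra! hcon
      exact hxy (hsep x y hcon)
    by_cases hx : x ∈ U m
    · exact ⟨U m, (U m)ᶜ, (hU m).isOpen, (hU m).compl.isOpen, hx, fun h => by tauto,
        disjoint_compl_right⟩
    · exact ⟨(U m)ᶜ, U m, (hU m).compl.isOpen, (hU m).isOpen, hx, by tauto,
        disjoint_compl_left⟩
  have hcont : Continuous g := by
    rw [continuous_iff_continuousAt]
    intro b V hV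
    obtain ⟨n, hn⟩ := exists_subset_nhds_of_compactSpace (V := A b)
      (antitone_nat_of_succ_le (hdec b)).directed_ge (fun n => (hclopen b n).1.isClosed)
      (U := V) (fun x hx => huniq b _ _ (hg' b) (Set.mem_iInter.1 hx) ▸ hV)
    have hcyl : ∀ᶠ b' in nhds b, ∀ i ∈ Finset.range n, b' i = b i := by
      rw [Filter.eventually_all_finset]
      intro i _
      exact (continuous_apply i).continuousAt.eventually
        (show ∀ᶠ c in nhds (b i), c = b i by simp [nhds_discrete])
    rw [Filter.mem_map]
    filter_upwards [hcyl] with b' hb'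
    refine hn ?_
    rw [hagree b b' n fun i hi => (hb' i (Finset.mem_range.2 hi)).symm]
    exact hg' b' n
  exact ⟨(Continuous.homeoOfEquivCompactToT2
    (f := Equiv.ofBijective g ⟨hinj, hsurj⟩) hcont).symm⟩

/-- Two isolated points can be swapped; if there is at most one, its complement is a Cantor space,
on which flipping all digits has no fixed point. -/
theorem exists_homeomorph_ne {E : Type*} [TopologicalSpace E] [CompactSpace E] [T1Space E]
    [Nontrivial E] (U : ℕ → Set E) (hU : ∀ n, IsClopen (U n))
    (hsep : ∀ x y, (∀ n, x ∈ U n ↔ y ∈ U n) → x = y) :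
    ∃ h : E ≃ₜ E, ∃ x, h x ≠ x := by
  classical
  suffices ∃ f : E → E, Continuous f ∧ Function.Involutive f ∧ ∃ x, f x ≠ x by
    obtain ⟨f, hf, hi, x, hx⟩ := this
    exact ⟨⟨hi.toPerm f, hf, hf⟩, x, hx⟩
  by_cases h2 : ∃ x y : E, x ≠ y ∧ IsOpen {x} ∧ IsOpen {y}
  · obtain ⟨x, y, hxy, hx, hy⟩ := h2
    refine ⟨Equiv.swap x y, ?_, fun z => by simp, x, by simpa using hxy.symm⟩
    rw [continuous_iff_continuousAt]
    intro z
    by_cases hzx : z = x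
    · subst hzx
      rw [ContinuousAt, (isOpen_singleton_iff_nhds_eq_pure z).1 hx]
      exact tendsto_pure_nhds _ _
    by_cases hzy : z = y
    · subst hzy
      rw [ContinuousAt, (isOpen_singleton_iff_nhds_eq_pure z).1 hy]
      exact tendsto_pure_nhds _ _
    have : (Equiv.swap x y : E → E) =ᶠ[nhds z] id := by
      filter_upwards [isOpen_ne.mem_nhds hzx, isOpen_ne.mem_nhds hzy] with w hw1 hw2
      exact Equiv.swap_apply_of_ne_of_ne hw1 hw2
    exact continuousAt_id.congr this.symm
  · push Not at h2
    set Q : Set E := {x | ¬ IsOpen {x}} with hQ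
    have hQo : IsOpen Q := by
      have : Qᶜ.Subsingleton := by
        intro x hx y hy
        by_contra hxy
        simp only [hQ, Set.mem_compl_iff, Set.mem_ofPred_eq, not_not] at hx hy
        exact h2 x y hxy hx hy
      simpa using this.finite.isClosed.isOpen_compl
    have hQc : IsOpen Qᶜ := by
      rw [isOpen_iff_mem_nhds]
      intro x hx
      have hx' : IsOpen {x} := by simpa [hQ] using hx
      exact Filter.mem_of_superset (hx'.mem_nhds rfl) (by simpa using hx)
    have : CompactSpace Q := isCompact_iff_compactSpace.1 (isOpen_compl_iff.1 hQc).isCompact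
    have : Nonempty Q := by
      obtain ⟨x, y, hxy⟩ := exists_pair_ne E
      by_cases hx : x ∈ Q
      · exact ⟨⟨x, hx⟩⟩
      · exact ⟨⟨y, h2 x y hxy (by simpa [hQ] using hx)⟩⟩
    obtain ⟨φ⟩ := nonempty_homeomorph_natToBool (Q := Q) (fun n => Subtype.val ⁻¹' U n)
      (fun n => (hU n).preimage continuous_subtype_val)
      (fun x y h => Subtype.ext (hsep x y h))
      (fun x hx => x.2 (by simpa using hQo.isOpenMap_subtype_val _ hx))
    let ψ : Q → Q := fun x => φ.symm (fun n => !(φ x n))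
    have hψ : Continuous ψ := φ.symm.continuous.comp <| continuous_pi fun n =>
      (continuous_of_discreteTopology (f := not)).comp ((continuous_apply n).comp φ.continuous)
    have hψi : ∀ x, ψ (ψ x) = x := by intro x; simp [ψ]
    have hψn : ∀ x, ψ x ≠ x := by
      intro x hx
      have := congrFun (congrArg φ hx) 0
      simp [ψ] at this
    let f : E → E := fun x => if hx : x ∈ Q then ψ ⟨x, hx⟩ else x
    have hfQ : ∀ x : Q, f x = ψ x := fun x => by simp [f]
    have hfc : ∀ x, x ∉ Q → f x = x := fun x hx => by simp [f, hx]
    refine ⟨f, ?_, ?_, ?_⟩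
    · rw [continuous_iff_continuousAt]
      intro x
      by_cases hx : x ∈ Q
      · have : ContinuousOn f Q := by
          rw [continuousOn_iff_continuous_domRestrict]
          exact (continuous_subtype_val.comp hψ).congr fun x => (hfQ x).symm
        exact this.continuousAt (hQo.mem_nhds hx)
      · refine continuousAt_id.congr ?_
        filter_upwards [hQc.mem_nhds hx] with y hy
        exact (hfc y hy).symm
    · intro x
      by_cases hx : x ∈ Q
      · rw [hfQ ⟨x, hx⟩, hfQ, hψi]
      · rw [hfc x hx, hfc x hx]
    · obtain ⟨x⟩ := ‹Nonempty Q›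
      exact ⟨x, fun h => hψn x (Subtype.ext ((hfQ x).symm.trans h))⟩

/-! ### Legs of a smooth fan -/

/-- The inverse slope of a point of the plane; for points of the Cantor fan other than the
vertex, it is the point of the Cantor set determining the leg (junk value `0` at height `0`). -/
def legSlope (q : ℝ × ℝ) : ℝ := q.1 / q.2

/-- The points of `X` that are highest on their leg. -/
def Tops (X : Set (ℝ × ℝ)) : Set (ℝ × ℝ) :=
  {e | e ∈ X ∧ 0 < e.2 ∧ ∀ p ∈ X, 0 < p.2 → legSlope p = legSlope e → p.2 ≤ e.2}

theorem isTotallyDisconnected_cantorSet : IsTotallyDisconnected cantorSet :=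
  totallyDisconnectedSpace_subtype_iff.1
    cantorSetHomeomorphNatToBool.symm.totallyDisconnectedSpace

theorem continuousOn_legSlope : ContinuousOn legSlope {q | 0 < q.2} :=
  continuousOn_fst.div continuousOn_snd fun _ hq => ne_of_gt hq

theorem height_nonneg {q : ℝ × ℝ} (hq : q ∈ CantorFan) : 0 ≤ q.2 := by
  obtain ⟨c, -, t, ht, rfl⟩ := hq
  exact ht.1

theorem eq_zero_of_height {q : ℝ × ℝ} (hq : q ∈ CantorFan) (h : q.2 = 0) : q = 0 := by
  obtain ⟨c, -, t, ht, rfl⟩ := hq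
  simp only at h
  simp [h]

theorem legSlope_mem {q : ℝ × ℝ} (hq : q ∈ CantorFan) (h : 0 < q.2) :
    legSlope q ∈ cantorSet := by
  obtain ⟨c, hc, t, ht, rfl⟩ := hq
  simp only at h
  rw [legSlope]
  simp only
  rwa [mul_div_cancel_left₀ _ h.ne']

theorem eq_smul_of_legSlope_eq {p q : ℝ × ℝ} (hp : 0 < p.2) (hq : 0 < q.2)
    (h : legSlope q = legSlope p) : q = (q.2 / p.2) • p := by
  rw [legSlope, legSlope, div_eq_div_iff hq.ne' hp.ne'] at h
  ext
  · simp only [Prod.smul_fst, smul_eq_mul]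
    field_simp
    linarith
  · simp only [Prod.smul_snd, smul_eq_mul]
    field_simp

theorem legSlope_smul {s : ℝ} (hs : s ≠ 0) (p : ℝ × ℝ) : legSlope (s • p) = legSlope p := by
  simp only [legSlope, Prod.smul_fst, Prod.smul_snd, smul_eq_mul]
  exact mul_div_mul_left _ _ hs

/-- A smooth fan is closed under shrinking towards the vertex. If `s • q` were missing, so would
be all points at the same height on legs near that of `q`; since the Cantor set is
zero-dimensional, the part of the fan above that height on a clopen set of legs would be
separated from the vertex. -/
theorem smul_mem {X : Set (ℝ × ℝ)} (hX : IsSmoothFan X) {q : ℝ × ℝ} (hq : q ∈ X) {s : ℝ}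
    (h0 : 0 ≤ s) (h1 : s ≤ 1) : s • q ∈ X := by
  by_contra hs
  have hqF := hX.subset_fan hq
  have hv : (0 : ℝ × ℝ) ∈ X := hX.vertex_mem
  have hs0 : 0 < s := h0.lt_of_ne (by rintro rfl; exact hs (by simpa using hv))
  have hs1 : s < 1 := h1.lt_of_ne (by rintro rfl; exact hs (by simpa using hq))
  have ht : 0 < q.2 := (height_nonneg hqF).lt_of_ne
    (fun h => hs (by rw [eq_zero_of_height hqF h.symm]; simpa using hv))
  have : TotallyDisconnectedSpace cantorSet :=
    totallyDisconnectedSpace_subtype_iff.2 isTotallyDisconnected_cantorSet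
  have : CompactSpace cantorSet := isCompact_iff_compactSpace.1 isCompact_cantorSet
  set r : ℝ := s * q.2 with hr
  have hr0 : 0 < r := mul_pos hs0 ht
  have hrq : r < q.2 := by nlinarith
  let W : Set cantorSet := {c | (r * (c : ℝ), r) ∉ X}
  have hW : IsOpen W :=
    hX.isCompact.isClosed.isOpen_compl.preimage
      (f := fun c : cantorSet => (r * (c : ℝ), r)) (by fun_prop)
  let c₀ : cantorSet := ⟨legSlope q, legSlope_mem hqF ht⟩
  have hc₀ : c₀ ∈ W := by
    have : ((r * (c₀ : ℝ), r) : ℝ × ℝ) = s • q := by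
      ext
      · simp only [c₀, legSlope, hr, Prod.smul_fst, smul_eq_mul]
        field_simp
      · simp [hr]
    change _ ∉ X
    rwa [this]
  obtain ⟨V, hV, hc₀V, hVW⟩ := compact_exists_isClopen_in_isOpen hW hc₀
  obtain ⟨O, hO, hOV⟩ := isOpen_induced_iff.1 hV.isOpen
  obtain ⟨O', hO', hOV'⟩ := isOpen_induced_iff.1 hV.compl.isOpen
  have hVO : ∀ c : cantorSet, (c : ℝ) ∈ O ↔ c ∈ V := fun c => by rw [← hOV]; rfl
  have hVO' : ∀ c : cantorSet, (c : ℝ) ∈ O' ↔ c ∉ V := fun c => by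
    rw [← Set.mem_compl_iff, ← hOV']; rfl
  have hpos : IsOpen {p : ℝ × ℝ | 0 < p.2} := isOpen_lt continuous_const continuous_snd
  have hu : IsOpen ({p : ℝ × ℝ | r < p.2} ∩ ({p | 0 < p.2} ∩ legSlope ⁻¹' O)) :=
    (isOpen_lt continuous_const continuous_snd).inter
      (continuousOn_legSlope.isOpen_inter_preimage hpos hO)
  have hv' : IsOpen ({p : ℝ × ℝ | p.2 < r} ∪ ({p | 0 < p.2} ∩ legSlope ⁻¹' O')) :=
    (isOpen_lt continuous_snd continuous_const).union
      (continuousOn_legSlope.isOpen_inter_preimage hpos hO')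
  obtain ⟨p, hpX, ⟨hp1, hp2, hp3⟩, hp4⟩ := hX.isConnected.isPreconnected _ _ hu hv' (by
    intro p hp
    rcases lt_or_ge p.2 r with hpr | hpr
    · exact Or.inr (Or.inl hpr)
    have hp0 : 0 < p.2 := hr0.trans_le hpr
    let c : cantorSet := ⟨legSlope p, legSlope_mem (hX.subset_fan hp) hp0⟩
    by_cases hc : c ∈ V
    · refine Or.inl ⟨hpr.lt_of_ne fun h => hVW hc ?_, hp0, (hVO c).2 hc⟩
      have : ((r * (c : ℝ), r) : ℝ × ℝ) = p := by
        ext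
        · simp only [c, legSlope, h]
          field_simp
        · exact h
      rwa [this]
    · exact Or.inr (Or.inr ⟨hp0, (hVO' c).2 hc⟩))
    ⟨q, hq, hrq, ht, (hVO c₀).2 hc₀V⟩ ⟨0, hv, Or.inl hr0⟩
  rcases hp4 with hp4 | ⟨-, hp4⟩
  · exact lt_asymm (show r < p.2 from hp1) (show p.2 < r from hp4)
  · let c : cantorSet := ⟨legSlope p, legSlope_mem (hX.subset_fan hpX) hp2⟩
    exact (hVO' c).1 hp4 ((hVO c).1 hp3)

theorem exists_top {X : Set (ℝ × ℝ)} (hX : IsSmoothFan X) {q : ℝ × ℝ} (hq : q ∈ X)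
    (h : 0 < q.2) : ∃ e ∈ Tops X, ∃ s : ℝ, 0 ≤ s ∧ s ≤ 1 ∧ q = s • e := by
  let K : Set (ℝ × ℝ) := X ∩ {p | q.2 ≤ p.2 ∧ p.1 = legSlope q * p.2}
  have hK : IsCompact K := hX.isCompact.inter_right
    ((isClosed_le continuous_const continuous_snd).inter
      (isClosed_eq continuous_fst (by fun_prop)))
  have hqK : q ∈ K := ⟨hq, le_rfl, by rw [legSlope]; field_simp⟩
  obtain ⟨e, ⟨heX, he1, he2⟩, hmax⟩ := hK.exists_isMaxOn ⟨q, hqK⟩ continuousOn_snd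
  have he0 : 0 < e.2 := h.trans_le he1
  have hse : legSlope e = legSlope q := by
    rw [legSlope, he2]
    field_simp
  refine ⟨e, ⟨heX, he0, fun p hp hp0 hpe => ?_⟩, q.2 / e.2, by positivity,
    (div_le_one he0).2 he1, eq_smul_of_legSlope_eq he0 h hse.symm⟩
  rcases le_or_gt q.2 p.2 with hqp | hqp
  · refine hmax (a := p) ⟨hp, hqp, ?_⟩
    rw [← hse, ← hpe, legSlope]
    field_simp
  · exact hqp.le.trans he1

/-! ### Arcs and orders of points -/

theorem IsArc.left_mem {α : Type*} [TopologicalSpace α] {A : Set α} {a b : α}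
    (h : IsArc A a b) : a ∈ A := by
  obtain ⟨φ, rfl, -⟩ := h
  exact Subtype.coe_prop _

theorem IsArc.isPreconnected {α : Type*} [TopologicalSpace α] {A : Set α} {a b : α}
    (h : IsArc A a b) : IsPreconnected A := by
  obtain ⟨φ, -, -⟩ := h
  have : PreconnectedSpace (Set.Icc (0 : ℝ) 1) := Subtype.preconnectedSpace isPreconnected_Icc
  exact isPreconnected_iff_preconnectedSpace.2
    (φ.surjective.denseRange.preconnectedSpace φ.continuous)

theorem isArc_segment {a b : ℝ × ℝ} (hab : a ≠ b) : IsArc (segment ℝ a b) a b := by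
  let g : Set.Icc (0 : ℝ) 1 → segment ℝ a b := fun t =>
    ⟨AffineMap.lineMap a b (t : ℝ), by
      rw [segment_eq_image_lineMap]; exact Set.mem_image_of_mem _ t.2⟩
  have hg : Continuous g :=
    (AffineMap.lineMap_continuous.comp continuous_subtype_val).subtype_mk _
  have hbij : Function.Bijective g := by
    constructor
    · intro s t hst
      exact Subtype.ext (AffineMap.lineMap_injective ℝ hab (congrArg Subtype.val hst))
    · rintro ⟨p, hp⟩
      rw [segment_eq_image_lineMap] at hp
      obtain ⟨t, ht, rfl⟩ := hp
      exact ⟨⟨t, ht⟩, rfl⟩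
  refine ⟨Continuous.homeoOfEquivCompactToT2 (f := Equiv.ofBijective g hbij) hg, ?_, ?_⟩
  · exact AffineMap.lineMap_apply_zero a b
  · exact AffineMap.lineMap_apply_one a b

/-- A point has order at most `1` if every arc starting there begins with a connected piece
lying in a fixed set `L` on which some continuous injective function is minimal at the point:
the images of two such pieces are intervals with the same left end, so the pieces overlap. -/
theorem not_orderAtLeast_two {X L : Set (ℝ × ℝ)} {x : ℝ × ℝ} (f : ℝ × ℝ → ℝ)
    (hf : Continuous f) (hinj : Set.InjOn f L) (hx : x ∈ L) (hmin : ∀ y ∈ L, f x ≤ f y)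
    (harc : ∀ A b, IsArc A x b → A ⊆ X →
      ∃ P ⊆ A ∩ L, IsPreconnected P ∧ x ∈ P ∧ ∃ p ∈ P, p ≠ x) :
    ¬ OrderAtLeast X x 2 := by
  rintro ⟨A, hAX, hA, hdisj⟩
  have key : ∀ i, ∃ ε, f x < ε ∧ ∀ r ∈ Set.Icc (f x) ε, ∃ y ∈ A i ∩ L, f y = r := by
    intro i
    obtain ⟨b, hb⟩ := hA i
    obtain ⟨P, hP, hPc, hxP, p, hp, hpx⟩ := harc (A i) b hb (hAX i)
    refine ⟨f p, (hmin p (hP hp).2).lt_of_ne fun h => hpx (hinj (hP hp).2 hx h.symm), ?_⟩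
    intro r hr
    obtain ⟨y, hy, hyr⟩ := hPc.intermediate_value hxP hp hf.continuousOn hr
    exact ⟨y, hP hy, hyr⟩
  obtain ⟨ε, hε, h0⟩ := key 0
  obtain ⟨δ, hδ, h1⟩ := key 1
  have hlt : f x < min ε δ := lt_min hε hδ
  obtain ⟨y, ⟨hyA, hyL⟩, hy⟩ := h0 (min ε δ) ⟨hlt.le, min_le_left _ _⟩
  obtain ⟨z, ⟨hzA, hzL⟩, hz⟩ := h1 (min ε δ) ⟨hlt.le, min_le_right _ _⟩
  obtain rfl : y = z := hinj hyL hzL (hy.trans hz.symm)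
  have : y ∈ A 0 ∩ A 1 := ⟨hyA, hzA⟩
  rw [hdisj 0 1 (by decide), Set.mem_singleton_iff] at this
  rw [← hy, this] at hlt
  exact lt_irrefl _ hlt

theorem segment_subset {X : Set (ℝ × ℝ)} (hX : IsSmoothFan X) {p : ℝ × ℝ} (hp : p ∈ X) {s : ℝ}
    (h0 : 0 ≤ s) (h1 : s ≤ 1) : segment ℝ (s • p) p ⊆ X := by
  rintro _ ⟨a, b, ha, hb, hab, rfl⟩
  rw [smul_smul, ← add_smul]
  refine smul_mem hX hp (by positivity) ?_
  nlinarith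

theorem not_orderAtLeast_two_of_top {X : Set (ℝ × ℝ)} (hX : IsSmoothFan X) {e : ℝ × ℝ}
    (he : e ∈ Tops X) : ¬ OrderAtLeast X e 2 := by
  obtain ⟨heX, he0, hmax⟩ := he
  refine not_orderAtLeast_two (L := {p | p ∈ X ∧ 0 < p.2 ∧ legSlope p = legSlope e})
    (fun p => -p.2) (by fun_prop) ?_ ⟨heX, he0, rfl⟩
    (fun p hp => neg_le_neg (hmax p hp.1 hp.2.1 hp.2.2)) ?_
  · rintro p ⟨-, hp0, hp⟩ q ⟨-, hq0, hq⟩ hpq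
    have hpq : q.2 = p.2 := neg_injective hpq.symm
    rw [eq_smul_of_legSlope_eq hp0 hq0 (hq.trans hp.symm), hpq, div_self hp0.ne', one_smul]
  · rintro A b ⟨φ, hφ0, -⟩ hAX
    let γ : Set.Icc (0 : ℝ) 1 → ℝ × ℝ := fun t => φ t
    have hγ : Continuous γ := continuous_subtype_val.comp φ.continuous
    have hnear : ∀ᶠ t in 𝓝 (0 : Set.Icc (0 : ℝ) 1), 0 < (γ t).2 := by
      refine (continuous_snd.comp hγ).continuousAt.eventually (lt_mem_nhds ?_)
      change 0 < (γ 0).2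
      rwa [show γ 0 = e from hφ0]
    -- The arc stays off the vertex on an initial interval `[0, δ]`.
    obtain ⟨δ, hδ0, hδ⟩ := Metric.eventually_nhds_iff_ball.1 hnear
    obtain ⟨η, hη0, hηδ⟩ := exists_between (lt_min hδ0 one_pos)
    have hη1 : η ≤ 1 := (hηδ.trans_le (min_le_right _ _)).le
    let d : Set.Icc (0 : ℝ) 1 := ⟨η, hη0.le, hη1⟩
    have hpos : ∀ t ∈ Set.Icc 0 d, 0 < (γ t).2 := by
      intro t ht
      refine hδ t ?_
      have h1 : (t : ℝ) ≤ η := ht.2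
      rw [Metric.mem_ball, Subtype.dist_eq, Real.dist_eq]
      simp only [Set.Icc.coe_zero, sub_zero]
      rw [abs_of_nonneg t.2.1]
      exact h1.trans_lt (hηδ.trans_le (min_le_left _ _))
    have hI : IsPreconnected (Set.Icc 0 d) := by
      rw [← Topology.IsInducing.subtypeVal.isPreconnected_image]
      convert isPreconnected_Icc (a := (0 : ℝ)) (b := η)
      ext r
      constructor
      · rintro ⟨t, ht, rfl⟩
        exact ⟨ht.1, ht.2⟩
      · intro hr
        exact ⟨⟨r, hr.1, hr.2.trans hη1⟩, ⟨hr.1, hr.2⟩, rfl⟩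
    have hP : IsPreconnected (γ '' Set.Icc 0 d) := hI.image _ hγ.continuousOn
    have hd : (0 : Set.Icc (0 : ℝ) 1) ≤ d := d.2.1
    have heP : e ∈ γ '' Set.Icc 0 d := ⟨0, ⟨le_rfl, hd⟩, hφ0⟩
    have hPX : γ '' Set.Icc 0 d ⊆ A := by
      rintro _ ⟨t, -, rfl⟩
      exact (φ t).2
    have hPpos : γ '' Set.Icc 0 d ⊆ {q | 0 < q.2} := by
      rintro _ ⟨t, ht, rfl⟩
      exact hpos t ht
    have hslope : (legSlope '' (γ '' Set.Icc 0 d)).Subsingleton := by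
      refine isTotallyDisconnected_cantorSet _ ?_
        (hP.image _ (continuousOn_legSlope.mono hPpos))
      rintro _ ⟨p, hp, rfl⟩
      exact legSlope_mem (hX.subset_fan (hAX (hPX hp))) (hPpos hp)
    refine ⟨γ '' Set.Icc 0 d, fun p hp => ⟨hPX hp, hAX (hPX hp), hPpos hp,
      hslope ⟨p, hp, rfl⟩ ⟨e, heP, rfl⟩⟩, hP, heP, γ d, ⟨d, ⟨hd, le_rfl⟩, rfl⟩, ?_⟩
    intro h
    have : d = 0 := φ.injective (Subtype.ext (h.trans hφ0.symm))
    exact hη0.ne' (congrArg Subtype.val this)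

theorem endpoints_eq_tops {X : Set (ℝ × ℝ)} (hX : IsSmoothFan X) : Endpoints X = Tops X := by
  have hne : ∀ {x : ℝ × ℝ}, 0 < x.2 → x ≠ 0 := by
    rintro x hx rfl
    exact lt_irrefl _ hx
  have hdown : ∀ {x : ℝ × ℝ}, x ∈ X → segment ℝ x 0 ⊆ X := by
    intro x hx
    have := segment_subset hX hx le_rfl zero_le_one
    rwa [zero_smul, segment_symm] at this
  ext x
  constructor
  · rintro ⟨hx, -, h2⟩
    have hx0 : 0 < x.2 := (height_nonneg (hX.subset_fan hx)).lt_of_ne fun h => h2 (by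
      rw [eq_zero_of_height (hX.subset_fan hx) h.symm]
      exact hX.vertex_order)
    refine ⟨hx, hx0, fun p hp hp0 hpx => ?_⟩
    by_contra! hlt
    -- The segments from `x` down to the vertex and up to `p` would show that `x` has order `2`.
    have hup : segment ℝ x p ⊆ X := by
      rw [eq_smul_of_legSlope_eq hp0 hx0 hpx.symm]
      exact segment_subset hX hp (by positivity) ((div_le_one hp0).2 hlt.le)
    have hcap : segment ℝ x 0 ∩ segment ℝ x p = {x} := by
      refine Set.Subset.antisymm ?_ ?_
      · rintro _ ⟨⟨a, b, ha, hb, hab, rfl⟩, ⟨a', b', ha', hb', hab', h⟩⟩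
        have h2 : a' * x.2 + b' * p.2 = a * x.2 := by
          simpa using congrArg Prod.snd h
        have : a = 1 := by nlinarith
        simp [this]
      · rintro _ rfl
        exact ⟨left_mem_segment _ _ _, left_mem_segment _ _ _⟩
    have hxp : x ≠ p := by
      rintro rfl
      exact lt_irrefl _ hlt
    refine h2 ⟨![segment ℝ x 0, segment ℝ x p], ?_, ?_, ?_⟩
    · intro i
      fin_cases i
      · exact hdown hx
      · exact hup
    · intro i
      fin_cases i
      · exact ⟨0, isArc_segment (hne hx0)⟩
      · exact ⟨p, isArc_segment hxp⟩
    · intro i j hij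
      fin_cases i <;> fin_cases j
      · exact absurd rfl hij
      · exact hcap
      · exact (Set.inter_comm _ _).trans hcap
      · exact absurd rfl hij
  · intro hx
    refine ⟨hx.1, ⟨fun _ => segment ℝ x 0, fun _ => hdown hx.1,
      fun _ => ⟨0, isArc_segment (hne hx.2.1)⟩, fun i j hij => ?_⟩,
      not_orderAtLeast_two_of_top hX hx⟩
    exact absurd (Subsingleton.elim i j) hij

theorem tops_nontrivial {X : Set (ℝ × ℝ)} (hX : IsSmoothFan X) : (Tops X).Nontrivial := by
  have hF := hX.subset_fan
  by_contra hsub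
  rw [Set.not_nontrivial_iff] at hsub
  -- With a single leg, the height is injective on `X`, so the vertex would have order `1`.
  refine not_orderAtLeast_two (X := X) (L := X) (x := fanVertex) Prod.snd continuous_snd ?_
    hX.vertex_mem (fun y hy => height_nonneg (hF hy)) ?_ hX.vertex_order
  · intro p hp q hq hpq
    rcases (height_nonneg (hF hp)).eq_or_lt with h | h
    · rw [eq_zero_of_height (hF hp) h.symm, eq_zero_of_height (hF hq) (hpq ▸ h.symm)]
    · obtain ⟨e, he, s, -, -, rfl⟩ := exists_top hX hp h
      obtain ⟨e', he', s', -, -, rfl⟩ := exists_top hX hq (hpq ▸ h)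
      obtain rfl := hsub he he'
      have : s = s' := mul_right_cancel₀ he.2.1.ne' (by simpa using hpq)
      rw [this]
  · intro A b hA hAX
    refine ⟨A, fun p hp => ⟨hp, hAX hp⟩, hA.isPreconnected, hA.left_mem, ?_⟩
    obtain ⟨φ, h0, h1⟩ := hA
    refine ⟨φ 1, (φ 1).2, fun h => ?_⟩
    have := φ.injective (Subtype.ext (h.trans h0.symm))
    exact one_ne_zero (congrArg Subtype.val this)

/-- Legs are determined by their slope, and a leg has only one top. -/
theorem legSlope_injOn_tops (X : Set (ℝ × ℝ)) : Set.InjOn legSlope (Tops X) := by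
  intro p hp q hq h
  have h2 : q.2 = p.2 :=
    le_antisymm (hp.2.2 q hq.1 hq.2.1 h.symm) (hq.2.2 p hp.1 hp.2.1 h)
  rw [eq_smul_of_legSlope_eq hp.2.1 hq.2.1 h.symm, h2, div_self hp.2.1.ne', one_smul]

/-! ### The cone over the set of tops -/

instance (E : Type*) [TopologicalSpace E] [CompactSpace E] : CompactSpace (Cone E) :=
  inferInstanceAs (CompactSpace (Quotient (coneSetoid E)))

/-- The point of the cone over `E` at height `s` above `e`. -/
def Cone.mk {E : Type*} [TopologicalSpace E] (q : E × Set.Icc (0 : ℝ) 1) : Cone E :=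
  Quotient.mk (coneSetoid E) q

theorem Cone.continuous_mk {E : Type*} [TopologicalSpace E] :
    Continuous (Cone.mk : E × Set.Icc (0 : ℝ) 1 → Cone E) :=
  continuous_quotient_mk'

/-- A map of spaces induces a map of cones. -/
def Cone.map {E : Type*} [TopologicalSpace E] (g : E → E) : Cone E → Cone E :=
  Quotient.map (fun q => (g q.1, q.2)) (by
    rintro a b (rfl | h)
    · exact Or.inl rfl
    · exact Or.inr h)

theorem Cone.continuous_map {E : Type*} [TopologicalSpace E] {g : E → E} (hg : Continuous g) :
    Continuous (Cone.map g) :=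
  Continuous.quotient_map' (by fun_prop) _

/-- A homeomorphism of spaces induces a homeomorphism of cones. -/
def Cone.mapHomeomorph {E : Type*} [TopologicalSpace E] (g : E ≃ₜ E) : Cone E ≃ₜ Cone E where
  toFun := Cone.map g
  invFun := Cone.map g.symm
  left_inv := by
    rintro ⟨q⟩
    exact congrArg Cone.mk (by simp)
  right_inv := by
    rintro ⟨q⟩
    exact congrArg Cone.mk (by simp)
  continuous_toFun := Cone.continuous_map g.continuous
  continuous_invFun := Cone.continuous_map g.symm.continuous

/-- The homeomorphism `(e, s) ↦ s • e` from the cone over the compact set of tops onto the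
fan. -/
theorem exists_cone_homeomorph {X : Set (ℝ × ℝ)} (hX : IsSmoothFan X)
    (hc : IsCompact (Tops X)) :
    ∃ F : Cone (Tops X) ≃ₜ X,
      ∀ q : Tops X × Set.Icc (0 : ℝ) 1, (F (Cone.mk q) : ℝ × ℝ) = (q.2 : ℝ) • (q.1 : ℝ × ℝ) := by
  have : CompactSpace (Tops X) := isCompact_iff_compactSpace.1 hc
  let f : Tops X × Set.Icc (0 : ℝ) 1 → X := fun q =>
    ⟨(q.2 : ℝ) • (q.1 : ℝ × ℝ), smul_mem hX q.1.2.1 q.2.2.1 q.2.2.2⟩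
  have hf : Continuous f := Continuous.subtype_mk (by fun_prop) _
  have hresp : ∀ a b, (coneSetoid (Tops X)).r a b → f a = f b := by
    rintro a b (rfl | ⟨h1, h2⟩)
    · rfl
    · exact Subtype.ext (by simp [f, h1, h2])
  let F : Cone (Tops X) → X := Quotient.lift f hresp
  have hF : Continuous F := hf.quotient_lift hresp
  have hbij : Function.Bijective F := by
    constructor
    · rintro ⟨⟨e, s⟩⟩ ⟨⟨e', s'⟩⟩ h
      have h : (s : ℝ) • (e : ℝ × ℝ) = (s' : ℝ) • (e' : ℝ × ℝ) := congrArg Subtype.val h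
      have hs : (s : ℝ) * (e : ℝ × ℝ).2 = s' * (e' : ℝ × ℝ).2 := congrArg Prod.snd h
      have he := e.2.2.1
      have he' := e'.2.2.1
      refine Quotient.sound (s := coneSetoid (Tops X)) ?_
      by_cases h0 : (s : ℝ) = 0
      · refine Or.inr ⟨h0, ?_⟩
        rw [h0, zero_mul] at hs
        exact (mul_eq_zero.1 hs.symm).resolve_right he'.ne'
      · have h0' : (s' : ℝ) ≠ 0 := by
          intro h1
          rw [h1, zero_mul] at hs
          exact (mul_ne_zero h0 he.ne') hs
        have hee : e = e' := Subtype.ext (legSlope_injOn_tops X e.2 e'.2 (by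
          rw [← legSlope_smul h0, h, legSlope_smul h0']))
        subst hee
        have : s = s' := Subtype.ext (mul_right_cancel₀ he.ne' hs)
        exact Or.inl (by rw [this])
    · rintro ⟨x, hx⟩
      rcases (height_nonneg (hX.subset_fan hx)).eq_or_lt with h | h
      · obtain ⟨e, he⟩ := (tops_nontrivial hX).nonempty
        refine ⟨Cone.mk (⟨e, he⟩, 0), Subtype.ext ?_⟩
        exact (zero_smul ℝ e).trans (eq_zero_of_height (hX.subset_fan hx) h.symm).symm
      · obtain ⟨e, he, s, h0, h1, rfl⟩ := exists_top hX hx h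
        exact ⟨Cone.mk (⟨e, he⟩, ⟨s, h0, h1⟩), rfl⟩
  exact ⟨Continuous.homeoOfEquivCompactToT2 (f := Equiv.ofBijective F hbij) hF, fun q => rfl⟩

/-- If `X` is a smooth fan and `E(X)` is compact, then `E(X)` is
zero-dimensional, `X` is homeomorphic to the cone over `E(X)`, and `X` is not endpoint
rigid: some self-homeomorphism of `X` moves some endpoint. -/
theorem compact_endpoints_not_rigid (X : Set (ℝ × ℝ)) (hX : IsSmoothFan X)
    (hc : IsCompact (Endpoints X)) :
    (∀ z : ↥(Endpoints X), ZeroDimPointAt z) ∧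
    Nonempty (↥X ≃ₜ Cone ↥(Endpoints X)) ∧
    ∃ h : X ≃ₜ X, ∃ x : X, (x : ℝ × ℝ) ∈ Endpoints X ∧
      ((h x : X) : ℝ × ℝ) ≠ (x : ℝ × ℝ) := by
  rw [endpoints_eq_tops hX] at hc ⊢
  have : CompactSpace (Tops X) := isCompact_iff_compactSpace.1 hc
  have hmem : ∀ e : Tops X, legSlope e ∈ cantorSet := fun e =>
    legSlope_mem (hX.subset_fan e.2.1) e.2.2.1
  let σ : Tops X → (ℕ → Bool) := fun e => cantorSetHomeomorphNatToBool ⟨legSlope e, hmem e⟩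
  have hσ : Continuous σ := cantorSetHomeomorphNatToBool.continuous.comp
    ((continuousOn_legSlope.comp_continuous continuous_subtype_val
      fun e => e.2.2.1).subtype_mk hmem)
  have hσi : Function.Injective σ := fun a b h => Subtype.ext
    (legSlope_injOn_tops X a.2 b.2
      (congrArg Subtype.val (cantorSetHomeomorphNatToBool.injective h)))
  have hnt : Nontrivial (Tops X) := (tops_nontrivial hX).coe_sort
  obtain ⟨F, hF⟩ := exists_cone_homeomorph hX hc
  refine ⟨fun z U hU => ?_, ⟨F.symm⟩, ?_⟩
  · have : TotallyDisconnectedSpace (Tops X) :=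
      (hσ.isClosedEmbedding hσi).isEmbedding.isTotallyDisconnected_range.1
        (isTotallyDisconnected_of_totallyDisconnectedSpace _)
    obtain ⟨O, hOU, hO, hzO⟩ := mem_nhds_iff.1 hU
    obtain ⟨V, hV, hzV, hVO⟩ := compact_exists_isClopen_in_isOpen hO hzO
    exact ⟨V, hV, hzV, hVO.trans hOU⟩
  · obtain ⟨g, e, hge⟩ := exists_homeomorph_ne (E := Tops X)
      (fun n => (fun e => σ e n) ⁻¹' {true})
      (fun n => (isClopen_discrete {true}).preimage ((continuous_apply n).comp hσ))
      (fun x y h => hσi (funext fun n => Bool.eq_iff_iff.2 (h n)))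
    have htop : ∀ e : Tops X, (F (Cone.mk (e, 1)) : ℝ × ℝ) = e := fun e => by
      rw [hF]
      exact one_smul ℝ _
    refine ⟨(F.symm.trans (Cone.mapHomeomorph g)).trans F, F (Cone.mk (e, 1)), ?_, ?_⟩
    · rw [htop]
      exact e.2
    · have : ((F.symm.trans (Cone.mapHomeomorph g)).trans F) (F (Cone.mk (e, 1)))
          = F (Cone.mk (g e, 1)) := by
        simp only [Homeomorph.trans_apply, Homeomorph.symm_apply_apply]
        rfl
      rw [this, htop, htop]
      exact fun h => hge (Subtype.ext h)

end SmoothFanPaper
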